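/- For all λ-terms M and N and every variable x, T_r(M[N/x]) = { a[b⃗/x] | a ∈ T_r(M), b⃗ is a finite list of elements of T_r(N), and a[b⃗/x] ≠ 0 }, where M[N/x] is the capture-avoiding substitution of N for x in M. -/

import Mathlib

/-! Ordinary λ-terms, in de Bruijn notation. -/
inductive Lam : Type
  | var : ℕ → Lam
  | lam : Lam → Lam
  | app : Lam → Lam → Lam
  deriving DecidableEq

namespace Lam

/-- Shift the free indices `≥ d` up by one. -/
def lift (d : ℕ) : Lam → Lam
  | var n => if n < d then var n else var (n + 1)
  | lam M => lam (lift (d + 1) M)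
  | app P Q => app (lift d P) (lift d Q)

/-- Capture-avoiding substitution of `N` for the free variable `k`. -/
def subst : Lam → ℕ → Lam → Lam
  | var n, k, N => if n = k then N else if k < n then var (n - 1) else var n
  | lam M, k, N => lam (subst M (k + 1) (lift 0 N))
  | app P Q, k, N => app (subst P k N) (subst Q k N)

/-- Number of free occurrences of the variable `k`. -/
def count (k : ℕ) : Lam → ℕ
  | var n => if n = k then 1 else 0
  | lam M => count (k + 1) M
  | app P Q => count k P + count k Q

/-- One-step β-reduction. -/
inductive Beta : Lam → Lam → Prop
  | beta (M N : Lam) : Beta (app (lam M) N) (subst M 0 N)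
  | lam {M M'} : Beta M M' → Beta (lam M) (lam M')
  | appL {P P' Q} : Beta P P' → Beta (app P Q) (app P' Q)
  | appR {P Q Q'} : Beta Q Q' → Beta (app P Q) (app P Q')

/-- The head of the application spine is a variable, with no λ on the spine. -/
def neutral : Lam → Bool
  | var _ => true
  | lam _ => false
  | app P _ => neutral P

/-- Head-normal forms: `λx₁…λxₘ. x N₁ … Nₙ`. -/
def isHNF : Lam → Prop
  | var _ => True
  | lam M => isHNF M
  | app P _ => neutral P = true

/-- The head-reduction function `H`: contracts the head redex, identity on head-normal
forms. -/
def H : Lam → Lam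
  | var n => var n
  | lam M => lam (H M)
  | app (lam P) Q => subst P 0 Q
  | app (var n) Q => app (var n) Q
  | app (app P₁ P₂) Q => app (H (app P₁ P₂)) Q

/-- The left-parallel reduction function `L`: identity on β-normal forms, propagated to
the arguments on head-normal forms, contraction of the head redex otherwise. -/
def L : Lam → Lam
  | var n => var n
  | lam M => lam (L M)
  | app (lam P) Q => subst P 0 Q
  | app (var n) Q => app (var n) (L Q)
  | app (app P₁ P₂) Q =>
      if neutral (app P₁ P₂) then app (L (app P₁ P₂)) (L Q)
      else app (L (app P₁ P₂)) Q

/-- Iterated application `M N₁ … Nₙ`. -/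
def mkApps (M : Lam) (Ns : List Lam) : Lam := Ns.foldl app M

/-- All free variables are `< d`. -/
def ClosedAt (d : ℕ) : Lam → Prop
  | var n => n < d
  | lam M => ClosedAt (d + 1) M
  | app P Q => ClosedAt d P ∧ ClosedAt d Q

/-- `M` is head-normalizable: it β-reduces in finitely many steps to a head-normal form. -/
def HeadNormalizable (M : Lam) : Prop :=
  ∃ N, Relation.ReflTransGen Beta M N ∧ isHNF N

/-- `M` is a β-normal form: it contains no β-redex, i.e. admits no β-step. -/
def BetaNF (M : Lam) : Prop := ¬∃ N, Beta M N

/-- `M` is β-normalizable: it β-reduces in finitely many steps to a β-normal form. -/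
def BetaNormalizable (M : Lam) : Prop :=
  ∃ N, Relation.ReflTransGen Beta M N ∧ BetaNF N

/-- `M` is strongly β-normalizable: no infinite β-reduction sequence starts from `M`. -/
def StronglyNormalizable (M : Lam) : Prop := Acc (fun N M' => Beta M' N) M

end Lam

/-! Rigid resource terms (the nonzero ones), in de Bruijn notation:
`a ::= x | λx.a | ⟨c⟩d⃗` with `d⃗` a list of rigid terms.
The term `0` is represented by `none : Option Rig`. -/
inductive Rig : Type
  | var : ℕ → Rig
  | lam : Rig → Rig
  | app : Rig → List Rig → Rig

namespace Rig

mutual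
/-- Number of free occurrences of the variable `k` in a rigid term. -/
def countR (k : ℕ) : Rig → ℕ
  | var n => if n = k then 1 else 0
  | lam a => countR (k + 1) a
  | app c ds => countR k c + countRList k ds
termination_by a => sizeOf a

def countRList (k : ℕ) : List Rig → ℕ
  | [] => 0
  | d :: ds => countR k d + countRList k ds
termination_by ds => sizeOf ds
end

mutual
/-- Shift the free indices `≥ d` up by one. -/
def liftR (d : ℕ) : Rig → Rig
  | var n => if n < d then var n else var (n + 1)
  | lam a => lam (liftR (d + 1) a)
  | app c ds => app (liftR d c) (liftRList d ds)
termination_by a => sizeOf a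

def liftRList (d : ℕ) : List Rig → List Rig
  | [] => []
  | a :: as => liftR d a :: liftRList d as
termination_by as => sizeOf as
end

mutual
/-- Rigid substitution `a[b⃗/k]`: the list `b⃗` is distributed, in order, over the
free occurrences of the variable `k`; the result is `none` (i.e. `0`) when
`|b⃗| ≠ n_k(a)`. -/
def rsubst (k : ℕ) : Rig → List Rig → Option Rig
  | var n, bs =>
      if n = k then (match bs with | [b] => some b | _ => none)
      else (match bs with
            | [] => some (if k < n then var (n - 1) else var n)
            | _ => none)
  | lam a, bs => (rsubst (k + 1) a (liftRList 0 bs)).map lam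
  | app c ds, bs =>
      match rsubst k c (bs.take (countR k c)), rsubstList k ds (bs.drop (countR k c)) with
      | some c', some ds' => some (app c' ds')
      | _, _ => none
termination_by a _ => sizeOf a

def rsubstList (k : ℕ) : List Rig → List Rig → Option (List Rig)
  | [], bs => if bs.isEmpty then some [] else none
  | d :: ds, bs =>
      match rsubst k d (bs.take (countR k d)), rsubstList k ds (bs.drop (countR k d)) with
      | some d', some ds' => some (d' :: ds')
      | _, _ => none
termination_by ds _ => sizeOf ds
end

/-- One-step rigid resource reduction `→_r` (contextual closure of
`⟨λx.a⟩b⃗ →_r a[b⃗/x]`); the result may be `0` (i.e. `none`), which annihilates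
the surrounding context. -/
inductive RStep : Rig → Option Rig → Prop
  | beta (a : Rig) (bs : List Rig) : RStep (app (lam a) bs) (rsubst 0 a bs)
  | lam {a r} : RStep a r → RStep (lam a) (r.map lam)
  | head {c r} (ds : List Rig) : RStep c r → RStep (app c ds) (r.map (fun c' => app c' ds))
  | arg {d r} (c : Rig) (ds₁ ds₂ : List Rig) :
      RStep d r → RStep (app c (ds₁ ++ d :: ds₂)) (r.map (fun d' => app c (ds₁ ++ d' :: ds₂)))

/-- `→_r` on rigid terms extended with `0`; `0` is inert. -/
inductive RStepO : Option Rig → Option Rig → Prop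
  | mk {a r} : RStep a r → RStepO (some a) r

/-- `r` is a `→_r`-normal form (`0` is one). -/
def RNormal (r : Option Rig) : Prop := ¬∃ r', RStepO r r'

/-- The head of the application spine is a variable, with no λ on the spine. -/
def rNeutral : Rig → Bool
  | var _ => true
  | lam _ => false
  | app c _ => rNeutral c

/-- Rigid head-normal forms among nonzero terms: `λx₁…λxₘ.⟨…⟨x⟩d⃗₁…⟩d⃗ₙ`
(the term `0` is a head-normal form, but it is treated separately). -/
def rIsHNF : Rig → Prop
  | var _ => True
  | lam a => rIsHNF a
  | app c _ => rNeutral c = true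

/-- The rigid head-reduction function `H_r`: contracts the head redex, identity on
head-normal forms; the result may be `0` (i.e. `none`). -/
def Hr : Rig → Option Rig
  | var n => some (var n)
  | lam a => (Hr a).map lam
  | app (lam a) bs => rsubst 0 a bs
  | app (var n) ds => some (app (var n) ds)
  | app (app c₁ c₂) ds => (Hr (app c₁ c₂)).map (fun c' => app c' ds)

/-- `H_r` extended to terms-or-`0`. -/
def HrO : Option Rig → Option Rig := fun r => r.bind Hr

mutual
/-- The rigid left-parallel reduction function `L_r`: identity on `→_r`-normal forms,
applied componentwise to the argument lists on head-normal forms, contraction of the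
head redex otherwise; the result may be `0` (i.e. `none`). -/
def Lr : Rig → Option Rig
  | var n => some (var n)
  | lam a => (Lr a).map lam
  | app (lam a) bs => rsubst 0 a bs
  | app (var n) ds => (LrList ds).map (fun ds' => app (var n) ds')
  | app (app c₁ c₂) ds =>
      if rNeutral (app c₁ c₂) then
        match Lr (app c₁ c₂), LrList ds with
        | some c', some ds' => some (app c' ds')
        | _, _ => none
      else (Lr (app c₁ c₂)).map (fun c' => app c' ds)
termination_by a => sizeOf a

def LrList : List Rig → Option (List Rig)
  | [] => some []
  | d :: ds =>
      match Lr d, LrList ds with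
      | some d', some ds' => some (d' :: ds')
      | _, _ => none
termination_by ds => sizeOf ds
end

/-- `L_r` extended to terms-or-`0`. -/
def LrO : Option Rig → Option Rig := fun r => r.bind Lr

/-- Positive resource terms: no empty list/multiset occurs as the argument of an
application. -/
inductive rPositive : Rig → Prop
  | var (n : ℕ) : rPositive (var n)
  | lam {a} : rPositive a → rPositive (lam a)
  | app {c : Rig} {ds : List Rig} :
      rPositive c → ds ≠ [] → (∀ d ∈ ds, rPositive d) → rPositive (app c ds)

end Rig

/-- The rigid expansion `T_r(M)` of a λ-term (equivalently, the support of its Taylor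
expansion, with multisets presented by lists: `Texp M` is closed under permutation of
argument lists). -/
def Texp : Lam → Set Rig
  | Lam.var n => {Rig.var n}
  | Lam.lam M => {a | ∃ b ∈ Texp M, a = Rig.lam b}
  | Lam.app P Q => {a | ∃ c ∈ Texp P, ∃ ds : List Rig, (∀ d ∈ ds, d ∈ Texp Q) ∧ a = Rig.app c ds}

namespace Rig

/-- The support of the `n`-linear substitution `∂_k a · b̄`, where the multiset `b̄` is
presented by the list `bs`: the finite formal sum (multiset) of all nonzero results of
rigid substitutions along bijective assignments, i.e. permutations of `bs`. -/
def permSubst (k : ℕ) (a : Rig) (bs : List Rig) : Multiset Rig :=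
  ↑(bs.permutations.filterMap (fun bs' => rsubst k a bs'))

/-- One step of non-erasing ε-resource reduction `→^{¬e}_{∂ε}` out of a single resource
term, producing a finite formal sum (a multiset) of resource terms: non-erasing resource
β-steps `⟨λx.a⟩b̄ → ∂_x a · b̄` (with `x ∈ FV(a)`) and resource σ₁-steps, under any
context. -/
inductive NEStep : Rig → Multiset Rig → Prop
  | beta {a : Rig} (bs : List Rig) :
      0 < countR 0 a → NEStep (app (lam a) bs) (permSubst 0 a bs)
  | sigma (a : Rig) (ts qs : List Rig) :
      NEStep (app (app (lam a) ts) qs) {app (lam (app a (liftRList 0 qs))) ts}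
  | lam {a σ} : NEStep a σ → NEStep (lam a) (σ.map lam)
  | head {c σ} (ds : List Rig) : NEStep c σ → NEStep (app c ds) (σ.map (fun c' => app c' ds))
  | arg {d σ} (c : Rig) (ds₁ ds₂ : List Rig) :
      NEStep d σ → NEStep (app c (ds₁ ++ d :: ds₂)) (σ.map (fun d' => app c (ds₁ ++ d' :: ds₂)))

/-- Non-erasing ε-resource reduction on finite formal sums, extended by linearity. -/
def NEStepSum (σ τ : Multiset Rig) : Prop :=
  ∃ (a : Rig) (ρ υ : Multiset Rig), σ = a ::ₘ ρ ∧ NEStep a υ ∧ τ = υ + ρ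

/-- `σ` is a `→^{¬e}_{∂ε}`-normal form. -/
def NENormal (σ : Multiset Rig) : Prop := ¬∃ τ, NEStepSum σ τ

end Rig

/-- One step of non-erasing ε-reduction on λ-terms: non-erasing β-steps
`(λx.M)N → M[N/x]` (with `x ∈ FV(M)`) together with σ₁-steps
`((λx.M)N)P → (λx.MP)N` (`x ∉ FV(P)`), under any context. -/
inductive NEeps : Lam → Lam → Prop
  | beta {M : Lam} (N : Lam) :
      0 < Lam.count 0 M → NEeps (Lam.app (Lam.lam M) N) (Lam.subst M 0 N)
  | sigma (M N P : Lam) :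
      NEeps (Lam.app (Lam.app (Lam.lam M) N) P)
        (Lam.app (Lam.lam (Lam.app M (Lam.lift 0 P))) N)
  | lam {M M'} : NEeps M M' → NEeps (Lam.lam M) (Lam.lam M')
  | appL {P P' Q} : NEeps P P' → NEeps (Lam.app P Q) (Lam.app P' Q)
  | appR {P Q Q'} : NEeps Q Q' → NEeps (Lam.app P Q) (Lam.app P Q')

/-- The set `S` of λ-terms. -/
inductive SLam : Lam → Prop
  | varApp (n : ℕ) (Ms : List Lam) :
      (∀ M ∈ Ms, SLam M) → SLam (Lam.mkApps (Lam.var n) Ms)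
  | lam {M} : SLam M → SLam (Lam.lam M)
  | redex (M₀ M₁ : Lam) (Ms : List Lam) :
      SLam M₁ → SLam (Lam.mkApps (Lam.subst M₀ 0 M₁) Ms) →
      SLam (Lam.mkApps (Lam.app (Lam.lam M₀) M₁) Ms)

/-- λI-terms: every abstraction binds a variable occurring free in its body. -/
def LamI : Lam → Prop
  | Lam.var _ => True
  | Lam.lam M => LamI M ∧ 0 < Lam.count 0 M
  | Lam.app P Q => LamI P ∧ LamI Q

theorem liftRList_eq_map (d : ℕ) (as : List Rig) :
    Rig.liftRList d as = as.map (Rig.liftR d) := by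
  induction as with
  | nil => simp [Rig.liftRList]
  | cons a as ih => simp [Rig.liftRList, ih]

theorem rsubst_var_iff (k n : ℕ) (bs : List Rig) (u : Rig) :
    Rig.rsubst k (Rig.var n) bs = some u ↔
      (n = k ∧ bs = [u]) ∨
        (n ≠ k ∧ bs = [] ∧ u = if k < n then Rig.var (n - 1) else Rig.var n) := by
  by_cases hn : n = k
  · match bs with
    | [] => simp [Rig.rsubst, hn]
    | [b] => simp [Rig.rsubst, hn]
    | b :: c :: l => simp [Rig.rsubst, hn]
  · match bs with
    | [] => simp [Rig.rsubst, hn, eq_comm]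
    | [b] => simp [Rig.rsubst, hn]
    | b :: c :: l => simp [Rig.rsubst, hn]

mutual
theorem rsubst_length (k : ℕ) (a : Rig) (bs : List Rig) (u : Rig)
    (h : Rig.rsubst k a bs = some u) : bs.length = Rig.countR k a := by
  match a with
  | Rig.var n =>
    rw [Rig.countR]
    rcases (rsubst_var_iff ..).1 h with ⟨h1, rfl⟩ | ⟨h1, rfl, -⟩ <;> simp [h1]
  | Rig.lam a =>
    rw [Rig.rsubst, Option.map_eq_some_iff] at h
    obtain ⟨v, hv, -⟩ := h
    have := rsubst_length (k + 1) a _ v hv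
    rw [Rig.countR, ← this, liftRList_eq_map, List.length_map]
  | Rig.app c ds =>
    rw [Rig.rsubst] at h
    split at h
    · rename_i c' ds' h1 h2
      have e1 := rsubst_length k c _ _ h1
      have e2 := rsubstList_length k ds _ _ h2
      rw [Rig.countR]
      simp only [List.length_take, List.length_drop] at e1 e2
      omega
    · simp at h
termination_by sizeOf a

theorem rsubstList_length (k : ℕ) (ds : List Rig) (bs : List Rig) (us : List Rig)
    (h : Rig.rsubstList k ds bs = some us) : bs.length = Rig.countRList k ds := by
  match ds with
  | [] =>
    rw [Rig.rsubstList] at h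
    rw [Rig.countRList]
    split_ifs at h
    simp_all
  | d :: ds =>
    rw [Rig.rsubstList] at h
    split at h
    · rename_i c' ds' h1 h2
      have e1 := rsubst_length k d _ _ h1
      have e2 := rsubstList_length k ds _ _ h2
      rw [Rig.countRList]
      simp only [List.length_take, List.length_drop] at e1 e2
      omega
    · simp at h
termination_by sizeOf ds
end

theorem rsubst_app_iff (k : ℕ) (c : Rig) (ds bs : List Rig) (u : Rig) :
    Rig.rsubst k (Rig.app c ds) bs = some u ↔
      ∃ b1 b2 c' ds', bs = b1 ++ b2 ∧ Rig.rsubst k c b1 = some c' ∧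
        Rig.rsubstList k ds b2 = some ds' ∧ u = Rig.app c' ds' := by
  rw [Rig.rsubst]
  constructor
  · intro h
    split at h
    · rename_i c' ds' h1 h2
      exact ⟨_, _, c', ds', (List.take_append_drop _ bs).symm, h1, h2, by simpa using h.symm⟩
    · simp at h
  · rintro ⟨b1, b2, c', ds', rfl, h1, h2, rfl⟩
    rw [← rsubst_length k c b1 c' h1]
    simp [h1, h2]

theorem rsubstList_cons_iff (k : ℕ) (c : Rig) (ds bs us : List Rig) :
    Rig.rsubstList k (c :: ds) bs = some us ↔
      ∃ b1 b2 c' ds', bs = b1 ++ b2 ∧ Rig.rsubst k c b1 = some c' ∧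
        Rig.rsubstList k ds b2 = some ds' ∧ us = c' :: ds' := by
  rw [Rig.rsubstList]
  constructor
  · intro h
    split at h
    · rename_i c' ds' h1 h2
      exact ⟨_, _, c', ds', (List.take_append_drop _ bs).symm, h1, h2, by simpa using h.symm⟩
    · simp at h
  · rintro ⟨b1, b2, c', ds', rfl, h1, h2, rfl⟩
    rw [← rsubst_length k c b1 c' h1]
    simp [h1, h2]

theorem list_mem_image {α β : Type} (f : α → β) (S : Set α) (l : List β) :
    (∀ b ∈ l, b ∈ f '' S) ↔ ∃ l' : List α, (∀ a ∈ l', a ∈ S) ∧ l'.map f = l := by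
  constructor
  · induction l with
    | nil => intro _; exact ⟨[], by simp⟩
    | cons b l ih =>
      intro h
      obtain ⟨l', h1, h2⟩ := ih (fun x hx => h x (List.mem_cons_of_mem _ hx))
      obtain ⟨a, ha, hab⟩ := h b List.mem_cons_self
      refine ⟨a :: l', ?_, by simp [hab, h2]⟩
      intro x hx
      rcases List.mem_cons.1 hx with rfl | hx
      · exact ha
      · exact h1 x hx
  · rintro ⟨l', h1, rfl⟩ b hb
    obtain ⟨a, ha, rfl⟩ := List.mem_map.1 hb
    exact ⟨a, h1 a ha, rfl⟩

theorem Texp_lift (M : Lam) (d : ℕ) : Texp (Lam.lift d M) = Rig.liftR d '' Texp M := by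
  induction M generalizing d with
  | var n =>
    simp only [Lam.lift, Texp, Set.image_singleton, Rig.liftR]
    split_ifs <;> rfl
  | lam M ih =>
    ext u
    simp only [Lam.lift, Texp, ih, Set.mem_ofPred_eq, Set.mem_image]
    constructor
    · rintro ⟨_, ⟨b, hb, rfl⟩, rfl⟩
      exact ⟨_, ⟨b, hb, rfl⟩, by rw [Rig.liftR]⟩
    · rintro ⟨_, ⟨b, hb, rfl⟩, rfl⟩
      exact ⟨_, ⟨b, hb, rfl⟩, by rw [Rig.liftR]⟩
  | app P Q ihP ihQ =>
    ext u
    simp only [Lam.lift, Texp, ihP, ihQ, list_mem_image, Set.mem_ofPred_eq]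
    constructor
    · rintro ⟨_, ⟨c, hc, rfl⟩, _, ⟨ds, hds, rfl⟩, rfl⟩
      exact ⟨_, ⟨c, hc, ds, hds, rfl⟩, by rw [Rig.liftR, liftRList_eq_map]⟩
    · rintro ⟨_, ⟨c, hc, ds, hds, rfl⟩, rfl⟩
      exact ⟨_, ⟨c, hc, rfl⟩, _, ⟨ds, hds, rfl⟩, by rw [Rig.liftR, liftRList_eq_map]⟩

theorem list_subst (S T : Set Rig) (k : ℕ) (us : List Rig) :
    (∀ u ∈ us, ∃ a ∈ S, ∃ bs : List Rig, (∀ b ∈ bs, b ∈ T) ∧ Rig.rsubst k a bs = some u) ↔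
      ∃ ds : List Rig, (∀ d ∈ ds, d ∈ S) ∧ ∃ bs : List Rig, (∀ b ∈ bs, b ∈ T) ∧
        Rig.rsubstList k ds bs = some us := by
  constructor
  · induction us with
    | nil => intro _; exact ⟨[], by simp, [], by simp, by simp [Rig.rsubstList]⟩
    | cons u us ih =>
      intro h
      obtain ⟨ds, hds, bs, hbs, e⟩ := ih (fun x hx => h x (List.mem_cons_of_mem _ hx))
      obtain ⟨a, ha, b1, hb1, e1⟩ := h u List.mem_cons_self
      refine ⟨a :: ds, ?_, b1 ++ bs, ?_,
        (rsubstList_cons_iff ..).2 ⟨_, _, _, _, rfl, e1, e, rfl⟩⟩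
      · intro x hx
        rcases List.mem_cons.1 hx with rfl | hx
        · exact ha
        · exact hds x hx
      · intro x hx
        rcases List.mem_append.1 hx with hx | hx
        · exact hb1 x hx
        · exact hbs x hx
  · rintro ⟨ds, hds, bs, hbs, e⟩
    induction ds generalizing us bs with
    | nil =>
      rw [Rig.rsubstList] at e
      split_ifs at e
      have : us = [] := by simpa using e.symm
      simp [this]
    | cons d ds ih =>
      obtain ⟨b1, b2, c', ds', rfl, h1, h2, rfl⟩ := (rsubstList_cons_iff ..).1 e
      intro u hu
      rcases List.mem_cons.1 hu with rfl | hu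
      · exact ⟨d, hds d List.mem_cons_self, b1,
          fun b hb => hbs b (List.mem_append_left _ hb), h1⟩
      · exact ih ds' (fun x hx => hds x (List.mem_cons_of_mem _ hx)) b2
          (fun b hb => hbs b (List.mem_append_right _ hb)) h2 u hu

/-- `T_r(M[N/x]) = { a[b⃗/x] | a ∈ T_r(M), b⃗ a list of elements of T_r(N),
a[b⃗/x] ≠ 0 }`. -/
theorem Texp_subst (M N : Lam) (k : ℕ) :
    Texp (Lam.subst M k N) =
      {u : Rig | ∃ a ∈ Texp M, ∃ bs : List Rig,
        (∀ b ∈ bs, b ∈ Texp N) ∧ Rig.rsubst k a bs = some u} := by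
  induction M generalizing k N with
  | var n =>
    ext u
    simp only [Lam.subst, Texp, Set.mem_singleton_iff, Set.mem_ofPred_eq, exists_eq_left,
      rsubst_var_iff]
    by_cases hn : n = k
    · simp [hn]
    · simp only [hn, if_false]
      split_ifs <;> simp [Texp, hn]
  | lam M ih =>
    ext u
    simp only [Lam.subst, Texp, ih, Texp_lift, list_mem_image, Set.mem_ofPred_eq]
    constructor
    · rintro ⟨v, ⟨a, ha, _, ⟨bs, hbs, rfl⟩, e⟩, rfl⟩
      refine ⟨_, ⟨a, ha, rfl⟩, bs, hbs, ?_⟩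
      rw [Rig.rsubst, liftRList_eq_map, e]
      rfl
    · rintro ⟨_, ⟨a, ha, rfl⟩, bs, hbs, e⟩
      rw [Rig.rsubst, liftRList_eq_map, Option.map_eq_some_iff] at e
      obtain ⟨v, hv, rfl⟩ := e
      exact ⟨v, ⟨a, ha, _, ⟨bs, hbs, rfl⟩, hv⟩, rfl⟩
  | app P Q ihP ihQ =>
    ext u
    simp only [Lam.subst, Texp, ihP, ihQ, Set.mem_ofPred_eq, list_subst]
    constructor
    · rintro ⟨c', ⟨c, hc, b1, hb1, e1⟩, us, ⟨ds, hds, b2, hb2, e2⟩, rfl⟩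
      refine ⟨_, ⟨c, hc, ds, hds, rfl⟩, b1 ++ b2, ?_,
        (rsubst_app_iff ..).2 ⟨_, _, _, _, rfl, e1, e2, rfl⟩⟩
      intro x hx
      rcases List.mem_append.1 hx with hx | hx
      · exact hb1 x hx
      · exact hb2 x hx
    · rintro ⟨_, ⟨c, hc, ds, hds, rfl⟩, bs, hbs, e⟩
      obtain ⟨b1, b2, c', ds', rfl, h1, h2, rfl⟩ := (rsubst_app_iff ..).1 e
      exact ⟨c', ⟨c, hc, b1, fun b hb => hbs b (List.mem_append_left _ hb), h1⟩, ds',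
        ⟨ds, hds, b2, fun b hb => hbs b (List.mem_append_right _ hb), h2⟩, rfl⟩
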